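/- In k(X), with f_i = (τ*)^i(f), the following two identities hold: f₃ − 3f₂ + 3f₁ − f₀ + 6(f₀f₂ − 2f₀f₃ + f₁f₃) = 0, and f₅ − 5f₄ + 10f₃ − 10f₂ + 5f₁ − f₀ + 40(f₀f₂f₄ − 3f₀f₂f₅ + 3f₀f₃f₅ − f₁f₃f₅) = 0. -/

import Mathlib

set_option maxHeartbeats 1000000
set_option synthInstance.maxHeartbeats 1000000

noncomputable section

open MvPolynomial

variable (k : Type*) [Field k]

/-- The polynomial ring k[w,x,y,z], with w,x,y,z the variables indexed by 0,1,2,3. -/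
abbrev conePoly := MvPolynomial (Fin 4) k

/-- The relation xz − y². -/
def coneRel : conePoly k := X 1 * X 3 - X 2 ^ 2

/-- The ideal (xz − y²). -/
def coneIdeal : Ideal (conePoly k) := Ideal.span {coneRel k}

/-- The coordinate ring A = k[w,x,y,z]/(xz − y²) of the affine cone. -/
abbrev coneRing := conePoly k ⧸ coneIdeal k

/-- The substitution w ↦ w − 2x + 2z, x ↦ z, y ↦ −y − 2z, z ↦ x + 4y + 4z. -/
def tauSub : Fin 4 → conePoly k :=
  ![X 0 - 2 * X 1 + 2 * X 3, X 3, - X 2 - 2 * X 3, X 1 + 4 * X 2 + 4 * X 3]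

/-- The inverse substitution. -/
def tauInvSub : Fin 4 → conePoly k :=
  ![X 0 + 6 * X 1 + 8 * X 2 + 2 * X 3, 4 * X 1 + 4 * X 2 + X 3, - (2 * X 1) - X 2, X 1]

/-- The substitution τ* as an algebra automorphism of k[w,x,y,z]. -/
def tauPoly : conePoly k ≃ₐ[k] conePoly k :=
  AlgEquiv.ofAlgHom (aeval (tauSub k)) (aeval (tauInvSub k))
    (by
      apply MvPolynomial.algHom_ext
      intro i
      fin_cases i <;> simp [tauSub, tauInvSub, map_ofNat] <;> ring)
    (by
      apply MvPolynomial.algHom_ext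
      intro i
      fin_cases i <;> simp [tauSub, tauInvSub, map_ofNat] <;> ring)

lemma tauPoly_coneRel : tauPoly k (coneRel k) = coneRel k := by
  show aeval (tauSub k) (coneRel k) = coneRel k
  simp only [coneRel, tauSub, Matrix.cons_val_zero, Matrix.cons_val_one, Matrix.head_cons,
    Matrix.cons_val_two, Matrix.tail_cons, Matrix.cons_val_three,
    map_add, map_sub, map_mul, map_neg, map_ofNat, map_pow, aeval_X]
  ring

lemma coneIdeal_eq_map :
    coneIdeal k = (coneIdeal k).map (tauPoly k : conePoly k →+* conePoly k) := by
  have h : (tauPoly k : conePoly k →+* conePoly k) (coneRel k) = coneRel k := tauPoly_coneRel k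
  rw [coneIdeal, Ideal.map_span, Set.image_singleton, h]

/-- The automorphism τ* of A = k[w,x,y,z]/(xz − y²) induced by the substitution. -/
def tauCone : coneRing k ≃ₐ[k] coneRing k :=
  Ideal.quotientEquivAlg (coneIdeal k) (coneIdeal k) (tauPoly k) (coneIdeal_eq_map k)

/-- k(X), the fraction field of A. -/
abbrev coneField := FractionRing (coneRing k)

/-- The automorphism τ* of k(X) induced by τ*. -/
def tauFrac :=
  IsFractionRing.algEquivOfAlgEquiv (R := k) (K := coneField k) (L := coneField k) (tauCone k)

/-- The images of the coordinates w, x, y, z in k(X). -/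
def varK (i : Fin 4) : coneField k :=
  algebraMap (coneRing k) (coneField k) (Ideal.Quotient.mk (coneIdeal k) (X i))

variable [IsDomain (coneRing k)]

/-- The rational function f = (w + 12x + 22y + 8z)/(12x + 6y) ∈ k(X). -/
def fRat : coneField k :=
  (varK k 0 + 12 * varK k 1 + 22 * varK k 2 + 8 * varK k 3) /
    (12 * varK k 1 + 6 * varK k 2)

/-- fᵢ = (τ*)^i (f). -/
def fIter (i : ℕ) : coneField k := ((tauFrac k) ^ i) (fRat k)

end

/-!
On the function field of the cone put `d = (w + 4y + 2z) / (6(x + 2y + z))` and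
`s = -(2x + y) / (x + y)`. Then `τ*` fixes `d`, sends `s` to `s + 1`, and
`f = (d - s) / (s (s + 1))`. Hence `fᵢ = (d - (s + i)) / ((s + i) (s + i + 1))`, and the identities
become identities between rational functions of `d` and `s`.
-/

section Shift

variable {K : Type*} [Field K]

/-- The rational function `(d - s) / (s (s + 1))`, which expresses `f` in coordinates `d`, `s` of
the function field for which `τ*` is the translation `s ↦ s + 1`. -/
def shiftRat (d s : K) : K := (d - s) / (s * (s + 1))

lemma map_shiftRat {L F : Type*} [Field L] [FunLike F K L] [RingHomClass F K L] (φ : F) (d s : K) :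
    φ (shiftRat d s) = shiftRat (φ d) (φ s) := by
  simp only [shiftRat, map_div₀, map_sub, map_mul, map_add, map_one]

lemma shiftRat_add_natCast (d s : K) (i : ℕ) :
    shiftRat d (s + i) = (d - (s + i)) / ((s + i) * (s + (i + 1 : ℕ))) := by
  rw [shiftRat, Nat.cast_add_one, add_assoc s]

theorem shiftRat_quadratic_identity {d s : K} (hs : ∀ n : ℕ, n ≤ 4 → s + n ≠ 0) {f : ℕ → K}
    (hf : ∀ i : ℕ, f i = shiftRat d (s + i)) :
    f 3 - 3 * f 2 + 3 * f 1 - f 0 + 6 * (f 0 * f 2 - 2 * (f 0 * f 3) + f 1 * f 3) = 0 := by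
  have h₀ := hs 0 (by norm_num)
  have h₁ := hs 1 (by norm_num)
  have h₂ := hs 2 (by norm_num)
  have h₃ := hs 3 (by norm_num)
  have h₄ := hs 4 (by norm_num)
  simp only [hf, shiftRat_add_natCast, Nat.reduceAdd]
  field_simp
  push_cast
  ring

theorem shiftRat_cubic_identity {d s : K} (hs : ∀ n : ℕ, n ≤ 6 → s + n ≠ 0) {f : ℕ → K}
    (hf : ∀ i : ℕ, f i = shiftRat d (s + i)) :
    f 5 - 5 * f 4 + 10 * f 3 - 10 * f 2 + 5 * f 1 - f 0 +
      40 * (f 0 * f 2 * f 4 - 3 * (f 0 * f 2 * f 5) + 3 * (f 0 * f 3 * f 5) -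
        f 1 * f 3 * f 5) = 0 := by
  have h₀ := hs 0 (by norm_num)
  have h₁ := hs 1 (by norm_num)
  have h₂ := hs 2 (by norm_num)
  have h₃ := hs 3 (by norm_num)
  have h₄ := hs 4 (by norm_num)
  have h₅ := hs 5 (by norm_num)
  have h₆ := hs 6 (by norm_num)
  simp only [hf, shiftRat_add_natCast, Nat.reduceAdd]
  field_simp
  push_cast
  ring

lemma algEquiv_pow_apply_of_apply_eq_add_one {k A : Type*} [CommSemiring k] [Semiring A]
    [Algebra k A] {σ : A ≃ₐ[k] A} {s : A} (h : σ s = s + 1) (i : ℕ) : (σ ^ i) s = s + i := by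
  induction i with
  | zero => simp
  | succ i ih =>
    rw [pow_succ', AlgEquiv.mul_apply, ih, map_add, h, map_natCast, Nat.cast_add_one]
    abel

end Shift

section Cone

open MvPolynomial

variable (k : Type*) [Field k]

lemma varK_one_mul_varK_three : varK k 1 * varK k 3 = varK k 2 ^ 2 := by
  have h : Ideal.Quotient.mk (coneIdeal k) (X 1 * X 3) =
      Ideal.Quotient.mk (coneIdeal k) (X 2 ^ 2) :=
    Ideal.Quotient.eq.2 (Ideal.subset_span rfl)
  simpa only [varK, map_mul, map_pow] using congrArg (algebraMap (coneRing k) (coneField k)) h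

variable {k} in
lemma sum_mul_eq_zero_of_sum_smul_varK_eq_zero {a p : Fin 4 → k} (hp : p 1 * p 3 = p 2 ^ 2)
    (h : ∑ i, a i • varK k i = 0) : ∑ i, a i * p i = 0 := by
  have hker : ∀ q ∈ coneIdeal k, aeval p q = 0 := by
    have hle : coneIdeal k ≤ RingHom.ker (aeval p : conePoly k →ₐ[k] k) := by
      rw [coneIdeal, Ideal.span_singleton_le_iff_mem, RingHom.mem_ker]
      simp [coneRel, hp]
    exact fun q hq => hle hq
  have hring : ∑ i, a i • Ideal.Quotient.mk (coneIdeal k) (X i) = 0 := by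
    refine IsFractionRing.injective (coneRing k) (coneField k) ?_
    simpa only [map_sum, algebraMap.coe_smul, map_zero, varK, ← algebraMap_smul] using h
  simpa using congrArg (Ideal.Quotient.liftₐ (coneIdeal k) (aeval p) hker) hring

theorem linearIndependent_varK : LinearIndependent k (varK k) := by
  refine Fintype.linearIndependent_iff.2 fun a h => ?_
  have hw := sum_mul_eq_zero_of_sum_smul_varK_eq_zero (p := ![1, 0, 0, 0]) (by simp) h
  have hx := sum_mul_eq_zero_of_sum_smul_varK_eq_zero (p := ![0, 1, 0, 0]) (by simp) h
  have hz := sum_mul_eq_zero_of_sum_smul_varK_eq_zero (p := ![0, 0, 0, 1]) (by simp) h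
  have hxyz := sum_mul_eq_zero_of_sum_smul_varK_eq_zero (p := ![0, 1, 1, 1]) (by simp) h
  simp only [Fin.sum_univ_four, Fin.isValue, Matrix.cons_val_zero, mul_one, Matrix.cons_val_one,
    mul_zero, add_zero, Matrix.cons_val, zero_add] at hw hx hz hxyz
  have hy : a 2 = 0 := by simpa only [hx, hz, zero_add, add_zero] using hxyz
  intro i
  fin_cases i <;> assumption

lemma sq_varK_one_add_varK_two :
    (varK k 1 + varK k 2) ^ 2 = varK k 1 * (varK k 1 + 2 * varK k 2 + varK k 3) := by
  linear_combination -varK_one_mul_varK_three k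

variable {k} in
lemma linearForm_varK_ne_zero {a : Fin 4 → k} (ha : a ≠ 0) : ∑ i, a i • varK k i ≠ 0 :=
  fun h => ha (funext (Fintype.linearIndependent_iff.1 (linearIndependent_varK k) a h))

lemma varK_one_add_varK_two_ne_zero : varK k 1 + varK k 2 ≠ 0 := by
  have ha : (![0, 1, 1, 0] : Fin 4 → k) ≠ 0 := fun h => by simpa using congrFun h 1
  simpa [Fin.sum_univ_four] using linearForm_varK_ne_zero ha

lemma varK_two_add_varK_three_ne_zero : varK k 2 + varK k 3 ≠ 0 := by
  have ha : (![0, 0, 1, 1] : Fin 4 → k) ≠ 0 := fun h => by simpa using congrFun h 2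
  simpa [Fin.sum_univ_four] using linearForm_varK_ne_zero ha

lemma varK_one_add_two_mul_varK_two_add_varK_three_ne_zero :
    varK k 1 + 2 * varK k 2 + varK k 3 ≠ 0 := by
  have ha : (![0, 1, 2, 1] : Fin 4 → k) ≠ 0 := fun h => by simpa using congrFun h 1
  simpa [Fin.sum_univ_four, Algebra.smul_def, map_ofNat (algebraMap k (coneField k))]
    using linearForm_varK_ne_zero ha

lemma tauFrac_varK (i : Fin 4) :
    tauFrac k (varK k i) =
      algebraMap (coneRing k) (coneField k) (Ideal.Quotient.mk (coneIdeal k) (tauSub k i)) := by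
  have h : tauPoly k (X i) = tauSub k i := aeval_X (tauSub k) i
  rw [← h]
  exact IsFractionRing.algEquivOfAlgEquiv_algebraMap (tauCone k) _

lemma tauFrac_varK_zero :
    tauFrac k (varK k 0) = varK k 0 - 2 * varK k 1 + 2 * varK k 3 := by
  rw [tauFrac_varK]
  simp [tauSub, varK, map_ofNat (Ideal.Quotient.mk (coneIdeal k)),
    map_ofNat (algebraMap (coneRing k) (coneField k))]

lemma tauFrac_varK_one : tauFrac k (varK k 1) = varK k 3 := by
  rw [tauFrac_varK]
  simp [tauSub, varK]

lemma tauFrac_varK_two : tauFrac k (varK k 2) = -varK k 2 - 2 * varK k 3 := by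
  rw [tauFrac_varK]
  simp [tauSub, varK, map_ofNat (Ideal.Quotient.mk (coneIdeal k)),
    map_ofNat (algebraMap (coneRing k) (coneField k))]

lemma tauFrac_varK_three :
    tauFrac k (varK k 3) = varK k 1 + 4 * varK k 2 + 4 * varK k 3 := by
  rw [tauFrac_varK]
  simp [tauSub, varK, map_ofNat (Ideal.Quotient.mk (coneIdeal k)),
    map_ofNat (algebraMap (coneRing k) (coneField k))]

variable [IsDomain (coneRing k)]

/-- The `τ*`-invariant coordinate `d = (w + 4y + 2z) / (6(x + 2y + z))` of `k(X)`; it is the junk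
value `0` in characteristic 2 or 3. -/
noncomputable def invariantCoord : coneField k :=
  (varK k 0 + 4 * varK k 2 + 2 * varK k 3) / (6 * (varK k 1 + 2 * varK k 2 + varK k 3))

/-- The coordinate `s = -(2x + y) / (x + y)` of `k(X)`, on which `τ*` acts as `s ↦ s + 1`. -/
noncomputable def shiftCoord : coneField k :=
  -(2 * varK k 1 + varK k 2) / (varK k 1 + varK k 2)

lemma tauFrac_invariantCoord : tauFrac k (invariantCoord k) = invariantCoord k := by
  simp only [invariantCoord, map_div₀, map_add, map_mul, map_ofNat, tauFrac_varK_zero,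
    tauFrac_varK_one, tauFrac_varK_two, tauFrac_varK_three]
  congr 1 <;> ring

lemma tauFrac_shiftCoord : tauFrac k (shiftCoord k) = shiftCoord k + 1 := by
  have hxy := varK_one_add_varK_two_ne_zero k
  have hyz := varK_two_add_varK_three_ne_zero k
  have hτ : tauFrac k (shiftCoord k) = -varK k 2 / (varK k 2 + varK k 3) := by
    simp only [shiftCoord, map_div₀, map_neg, map_add, map_mul, map_ofNat, tauFrac_varK_one,
      tauFrac_varK_two]
    rw [← neg_div_neg_eq]
    congr 1 <;> ring
  rw [hτ, shiftCoord]
  field_simp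
  linear_combination varK_one_mul_varK_three k

lemma shiftCoord_add_natCast_ne_zero (n : ℕ) : shiftCoord k + n ≠ 0 := by
  have hxy := varK_one_add_varK_two_ne_zero k
  have ha : (![0, (n : k) - 2, n - 1, 0] : Fin 4 → k) ≠ 0 := by
    intro h
    have h₁ : (n : k) - 2 = 0 := by simpa using congrFun h 1
    have h₂ : (n : k) - 1 = 0 := by simpa using congrFun h 2
    exact one_ne_zero (by linear_combination h₂ - h₁ : (1 : k) = 0)
  have hform : ((n : coneField k) - 2) * varK k 1 + (n - 1) * varK k 2 ≠ 0 := by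
    simpa [Fin.sum_univ_four, Algebra.smul_def, map_ofNat (algebraMap k (coneField k))]
      using linearForm_varK_ne_zero ha
  have hs : shiftCoord k + n = ((n - 2) * varK k 1 + (n - 1) * varK k 2) /
      (varK k 1 + varK k 2) := by
    rw [shiftCoord]
    field_simp
    ring
  exact hs ▸ div_ne_zero hform hxy

lemma shiftCoord_mul_add_one :
    shiftCoord k * (shiftCoord k + 1) =
      (2 * varK k 1 + varK k 2) / (varK k 1 + 2 * varK k 2 + varK k 3) := by
  have hxy := varK_one_add_varK_two_ne_zero k
  have hxyz := varK_one_add_two_mul_varK_two_add_varK_three_ne_zero k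
  have hs : shiftCoord k + 1 = -varK k 1 / (varK k 1 + varK k 2) := by
    rw [shiftCoord, div_add_one hxy]
    ring
  rw [hs, shiftCoord, div_mul_div_comm, div_eq_div_iff (mul_ne_zero hxy hxy) hxyz]
  linear_combination -(2 * varK k 1 + varK k 2) * sq_varK_one_add_varK_two k

variable {k}

lemma invariantCoord_sub_shiftCoord (h6 : (6 : k) ≠ 0) :
    invariantCoord k - shiftCoord k =
      (varK k 0 + 12 * varK k 1 + 22 * varK k 2 + 8 * varK k 3) /
        (6 * (varK k 1 + 2 * varK k 2 + varK k 3)) := by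
  have h6' : (6 : coneField k) ≠ 0 := by
    simpa only [map_ofNat] using (map_ne_zero (algebraMap k (coneField k))).2 h6
  have hxy := varK_one_add_varK_two_ne_zero k
  have hxyz := varK_one_add_two_mul_varK_two_add_varK_three_ne_zero k
  have hs : shiftCoord k = -(6 * (2 * varK k 1 + 3 * varK k 2 + varK k 3)) /
      (6 * (varK k 1 + 2 * varK k 2 + varK k 3)) := by
    rw [shiftCoord, div_eq_div_iff hxy (mul_ne_zero h6' hxyz)]
    linear_combination -6 * varK_one_mul_varK_three k
  rw [hs, invariantCoord, ← sub_div]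
  congr 1
  ring

lemma fRat_eq_shiftRat (h6 : (6 : k) ≠ 0) :
    fRat k = shiftRat (invariantCoord k) (shiftCoord k) := by
  have hxyz := varK_one_add_two_mul_varK_two_add_varK_three_ne_zero k
  rw [shiftRat, invariantCoord_sub_shiftCoord h6, shiftCoord_mul_add_one, div_div_div_eq, fRat,
    ← mul_div_mul_right _ _ hxyz]
  congr 1
  ring

lemma fIter_eq_shiftRat (h6 : (6 : k) ≠ 0) (i : ℕ) :
    fIter k i = shiftRat (invariantCoord k) (shiftCoord k + i) := by
  have hd : (tauFrac k ^ i) (invariantCoord k) = invariantCoord k :=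
    (MulAction.stabilizer (coneField k ≃ₐ[k] coneField k) (invariantCoord k)).pow_mem
      (tauFrac_invariantCoord k) i
  rw [fIter, fRat_eq_shiftRat h6, map_shiftRat, hd,
    algEquiv_pow_apply_of_apply_eq_add_one (tauFrac_shiftCoord k)]

end Cone

theorem fIter_identities_general (k : Type*) [Field k] [IsDomain (coneRing k)]
    (h6 : (6 : k) ≠ 0) :
    (fIter k 3 - 3 * fIter k 2 + 3 * fIter k 1 - fIter k 0 +
        6 * (fIter k 0 * fIter k 2 - 2 * (fIter k 0 * fIter k 3) + fIter k 1 * fIter k 3) = 0) ∧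
      (fIter k 5 - 5 * fIter k 4 + 10 * fIter k 3 - 10 * fIter k 2 + 5 * fIter k 1 - fIter k 0 +
        40 * (fIter k 0 * fIter k 2 * fIter k 4 - 3 * (fIter k 0 * fIter k 2 * fIter k 5) +
          3 * (fIter k 0 * fIter k 3 * fIter k 5) - fIter k 1 * fIter k 3 * fIter k 5) = 0) :=
  ⟨shiftRat_quadratic_identity (fun n _ => shiftCoord_add_natCast_ne_zero k n)
      (fIter_eq_shiftRat h6),
    shiftRat_cubic_identity (fun n _ => shiftCoord_add_natCast_ne_zero k n)
      (fIter_eq_shiftRat h6)⟩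

/-!
Statement 7: In k(X), with fᵢ = (τ*)^i(f), the identities
f₃ − 3f₂ + 3f₁ − f₀ + 6(f₀f₂ − 2f₀f₃ + f₁f₃) = 0 and
f₅ − 5f₄ + 10f₃ − 10f₂ + 5f₁ − f₀ + 40(f₀f₂f₄ − 3f₀f₂f₅ + 3f₀f₃f₅ − f₁f₃f₅) = 0 hold.
-/

theorem fIter_identities (k : Type*) [Field k] [CharZero k] [IsDomain (coneRing k)] :
    (fIter k 3 - 3 * fIter k 2 + 3 * fIter k 1 - fIter k 0 +
        6 * (fIter k 0 * fIter k 2 - 2 * (fIter k 0 * fIter k 3) + fIter k 1 * fIter k 3) = 0) ∧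
      (fIter k 5 - 5 * fIter k 4 + 10 * fIter k 3 - 10 * fIter k 2 + 5 * fIter k 1 - fIter k 0 +
        40 * (fIter k 0 * fIter k 2 * fIter k 4 - 3 * (fIter k 0 * fIter k 2 * fIter k 5) +
          3 * (fIter k 0 * fIter k 3 * fIter k 5) - fIter k 1 * fIter k 3 * fIter k 5) = 0) := by
  exact fIter_identities_general k (by norm_num)
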